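/- Let s be a positive integer and let k be a binomially distributed random variable with s trials and success probability p ∈ [0,1], and let p̂ = k/s. For all ε, δ ∈ (0,1], if s ≥ (ε + 1/2)/(ε²·δ), then the probability that p̂ lies within ε of p satisfies P(p − ε ≤ p̂ ≤ p + ε) ≥ 1 − δ. -/

import Mathlib

/-- The probability that a binomial random variable with `s` trials and success
probability `p` takes the value `j` is `C(s,j) * p^j * (1-p)^(s-j)`. -/
noncomputable def binomPMF (s : ℕ) (p : ℝ) (j : ℕ) : ℝ :=
  (s.choose j : ℝ) * p ^ j * (1 - p) ^ (s - j)

/-!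
The estimate `k / s` has mean `p` and variance `p * (1 - p) / s ≤ 1 / (4 * s)`, so Chebyshev's
inequality bounds the probability of an error of at least `ε` by `1 / (4 * s * ε ^ 2)`. The mass
and the variance of the binomial distribution are identities between Bernstein polynomials,
evaluated at `p`.
-/

open Finset

theorem sum_filter_le_abs_sub_le_div_sq {ι K : Type*} [Field K] [LinearOrder K]
    [IsStrictOrderedRing K] {t : Finset ι} {w : ι → K} (hw : ∀ i ∈ t, 0 ≤ w i)
    (X : ι → K) (c : K) {ε : K} (hε : 0 < ε) :
    ∑ i ∈ t with ε ≤ |X i - c|, w i ≤ (∑ i ∈ t, (X i - c) ^ 2 * w i) / ε ^ 2 := by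
  rw [le_div_iff₀' (by positivity), mul_sum]
  calc ∑ i ∈ t with ε ≤ |X i - c|, ε ^ 2 * w i
      ≤ ∑ i ∈ t with ε ≤ |X i - c|, (X i - c) ^ 2 * w i := by
        refine sum_le_sum fun i hi ↦ ?_
        obtain ⟨hit, hεi⟩ := mem_filter.mp hi
        have hsq : ε ^ 2 ≤ (X i - c) ^ 2 := sq_le_sq.mpr (by rwa [abs_of_pos hε])
        exact mul_le_mul_of_nonneg_right hsq (hw i hit)
    _ ≤ ∑ i ∈ t, (X i - c) ^ 2 * w i :=
        sum_le_sum_of_subset_of_nonneg (filter_subset _ _)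
          fun i hit _ ↦ mul_nonneg (sq_nonneg _) (hw i hit)

theorem binomPMF_nonneg (s : ℕ) {p : ℝ} (hp0 : 0 ≤ p) (hp1 : p ≤ 1) (j : ℕ) :
    0 ≤ binomPMF s p j :=
  mul_nonneg (mul_nonneg (Nat.cast_nonneg _) (pow_nonneg hp0 j)) (pow_nonneg (sub_nonneg.mpr hp1) _)

theorem eval_bernsteinPolynomial_eq_binomPMF (s : ℕ) (p : ℝ) (j : ℕ) :
    (bernsteinPolynomial ℝ s j).eval p = binomPMF s p j := by
  simp [bernsteinPolynomial, binomPMF]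

theorem sum_binomPMF (s : ℕ) (p : ℝ) : ∑ j ∈ range (s + 1), binomPMF s p j = 1 := by
  simpa [Polynomial.eval_finsetSum, eval_bernsteinPolynomial_eq_binomPMF] using
    congrArg (Polynomial.eval p) (bernsteinPolynomial.sum ℝ s)

theorem sum_sq_mul_sub_mul_binomPMF (s : ℕ) (p : ℝ) :
    ∑ j ∈ range (s + 1), (s * p - j) ^ 2 * binomPMF s p j = s * p * (1 - p) := by
  simpa [Polynomial.eval_finsetSum, eval_bernsteinPolynomial_eq_binomPMF] using
    congrArg (Polynomial.eval p) (bernsteinPolynomial.variance ℝ s)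

theorem sum_sq_div_sub_mul_binomPMF {s : ℕ} (hs : s ≠ 0) (p : ℝ) :
    ∑ j ∈ range (s + 1), ((j : ℝ) / s - p) ^ 2 * binomPMF s p j = p * (1 - p) / s := by
  have hs' : (s : ℝ) ≠ 0 := Nat.cast_ne_zero.mpr hs
  calc ∑ j ∈ range (s + 1), ((j : ℝ) / s - p) ^ 2 * binomPMF s p j
      = (∑ j ∈ range (s + 1), (s * p - j) ^ 2 * binomPMF s p j) / s ^ 2 := by
        rw [sum_div]
        refine sum_congr rfl fun j _ ↦ ?_
        field_simp
        ring
    _ = p * (1 - p) / s := by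
        rw [sum_sq_mul_sub_mul_binomPMF]
        field_simp

theorem sum_binomPMF_filter_le_abs_sub_le {s : ℕ} (hs : s ≠ 0) {p : ℝ} (hp0 : 0 ≤ p)
    (hp1 : p ≤ 1) {ε : ℝ} (hε : 0 < ε) :
    ∑ j ∈ range (s + 1) with ε ≤ |((j : ℕ) : ℝ) / s - p|, binomPMF s p j
      ≤ p * (1 - p) / (s * ε ^ 2) := by
  rw [← div_div, ← sum_sq_div_sub_mul_binomPMF hs]
  exact sum_filter_le_abs_sub_le_div_sq (fun j _ ↦ binomPMF_nonneg s hp0 hp1 j) _ p hε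

theorem one_sub_le_sum_binomPMF_filter_abs_sub_le {s : ℕ} (hs : s ≠ 0) {p : ℝ} (hp0 : 0 ≤ p)
    (hp1 : p ≤ 1) {ε : ℝ} (hε : 0 < ε) :
    1 - p * (1 - p) / (s * ε ^ 2)
      ≤ ∑ j ∈ range (s + 1) with |((j : ℕ) : ℝ) / s - p| ≤ ε, binomPMF s p j := by
  have hsplit := sum_filter_add_sum_filter_not (range (s + 1))
    (fun j : ℕ ↦ |(j : ℝ) / s - p| ≤ ε) (binomPMF s p)
  have htail : ∑ j ∈ range (s + 1) with ¬|((j : ℕ) : ℝ) / s - p| ≤ ε, binomPMF s p j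
      ≤ p * (1 - p) / (s * ε ^ 2) :=
    (sum_le_sum_of_subset_of_nonneg
      (monotone_filter_right _ fun _ _ hj ↦ (not_le.mp hj).le)
      fun j _ _ ↦ binomPMF_nonneg s hp0 hp1 j).trans
      (sum_binomPMF_filter_le_abs_sub_le hs hp0 hp1 hε)
  rw [sum_binomPMF] at hsplit
  linarith

theorem absolute_error_bound_general (s : ℕ) (p : ℝ) (hp0 : 0 ≤ p) (hp1 : p ≤ 1)
    (ε δ : ℝ) (hε0 : 0 < ε) (hδ0 : 0 < δ) (hbound : (s : ℝ) ≥ 1 / (4 * (ε ^ 2 * δ))) :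
    (∑ j ∈ range (s + 1),
        if p - ε ≤ (j : ℝ) / (s : ℝ) ∧ (j : ℝ) / (s : ℝ) ≤ p + ε
        then binomPMF s p j else 0) ≥ 1 - δ := by
  have hs : (0 : ℝ) < s := lt_of_lt_of_le (by positivity) hbound
  have hvar : p * (1 - p) ≤ 1 / 4 := by linarith [sq_nonneg (p - 1 / 2)]
  have htail : p * (1 - p) / (s * ε ^ 2) ≤ δ := by
    rw [ge_iff_le, div_le_iff₀ (by positivity)] at hbound
    rw [div_le_iff₀ (by positivity)]
    linarith
  have hinterval (j : ℕ) :
      p - ε ≤ (j : ℝ) / s ∧ (j : ℝ) / s ≤ p + ε ↔ |(j : ℝ) / s - p| ≤ ε := by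
    rw [← Set.mem_Icc, ← Set.mem_Icc_iff_abs_le, abs_sub_comm]
  simp only [hinterval, ← sum_filter]
  exact (sub_le_sub_left htail 1).trans
    (one_sub_le_sum_binomPMF_filter_abs_sub_le (Nat.cast_pos.mp hs).ne' hp0 hp1 hε0)

/-- **Absolute Error** (paper's Theorem, relaxed bound): if the number of samples
`s` satisfies `s ≥ (ε + 1/2)/(ε² δ)`, then the estimate `p̂ = k/s` of a binomially
distributed `k` lies within `ε` of `p` with probability at least `1 - δ`. -/
theorem absolute_error_bound (s : ℕ) (hs : 1 ≤ s) (p : ℝ) (hp0 : 0 ≤ p) (hp1 : p ≤ 1)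
    (ε δ : ℝ) (hε0 : 0 < ε) (hε1 : ε ≤ 1) (hδ0 : 0 < δ) (hδ1 : δ ≤ 1)
    (hbound : (s : ℝ) ≥ (ε + 1 / 2) / (ε ^ 2 * δ)) :
    (∑ j ∈ Finset.range (s + 1),
        if p - ε ≤ (j : ℝ) / (s : ℝ) ∧ (j : ℝ) / (s : ℝ) ≤ p + ε
        then binomPMF s p j else 0) ≥ 1 - δ := by
  have hquarter : 1 / (4 * (ε ^ 2 * δ)) ≤ (ε + 1 / 2) / (ε ^ 2 * δ) := by
    rw [← div_div]; gcongr; linarith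
  exact absolute_error_bound_general s p hp0 hp1 ε δ hε0 hδ0 (hquarter.trans hbound)
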